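/- arXiv:2307.03594 — 2 statements merged into one kernel-verified Lean document; each statement's English description precedes it below -/
import Mathlib

section
/- Let X, Y, Y', Y'' be real random variables on a common probability space such that Y, Y', Y'' are identically distributed, (X,Y') is countermonotonic, and (X,Y'') is comonotonic. Let g₁, g₂ : ℝ → ℝ be strictly increasing functions such that g₁∘X, g₂∘Y, g₂∘Y', g₂∘Y'' are integrable and the products (g₁∘X)·(g₂∘Y), (g₁∘X)·(g₂∘Y'), (g₁∘X)·(g₂∘Y'') are integrable. If Cov(g₁∘X, g₂∘Y) = Cov(g₁∘X, g₂∘Y''), then (X,Y) is comonotonic; if Cov(g₁∘X, g₂∘Y) = Cov(g₁∘X, g₂∘Y'), then (X,Y) is countermonotonic. -/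
open MeasureTheory

/-- `(X,Y)` is comonotonic: it has the same joint distribution as a pair of
nondecreasing functions of a single random variable. -/
def Comonotonic {Ω : Type*} [MeasurableSpace Ω] (μ : Measure Ω) (X Y : Ω → ℝ) : Prop :=
  ∃ (Z : Ω → ℝ) (ν₁ ν₂ : ℝ → ℝ), Measurable Z ∧ Monotone ν₁ ∧ Monotone ν₂ ∧
    μ.map (fun ω => (X ω, Y ω)) = μ.map (fun ω => (ν₁ (Z ω), ν₂ (Z ω)))

/-- `(X,Y)` is countermonotonic: it has the same joint distribution as a pair of a
nondecreasing and a nonincreasing function of a single random variable. -/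
def Countermonotonic {Ω : Type*} [MeasurableSpace Ω] (μ : Measure Ω) (X Y : Ω → ℝ) : Prop :=
  ∃ (Z : Ω → ℝ) (ν₁ ν₂ : ℝ → ℝ), Measurable Z ∧ Monotone ν₁ ∧ Antitone ν₂ ∧
    μ.map (fun ω => (X ω, Y ω)) = μ.map (fun ω => (ν₁ (Z ω), ν₂ (Z ω)))

/-- Covariance `Cov(U,V) = E[UV] − E[U]E[V]`. -/
noncomputable def covar {Ω : Type*} [MeasurableSpace Ω] (μ : Measure Ω) (U V : Ω → ℝ) : ℝ :=
  ∫ ω, U ω * V ω ∂μ - (∫ ω, U ω ∂μ) * (∫ ω, V ω ∂μ)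

open Set

/-- The signed indicator of the interval between `0` and `u`, whose integral is `u`. -/
noncomputable def layer (u s : ℝ) : ℝ :=
  (Ico 0 u).indicator 1 s - (Ico u 0).indicator 1 s

theorem layer_eq_indicator_Ioi (u s : ℝ) :
    layer u s = (Ioi s).indicator 1 u - (Iio 0).indicator 1 s := by
  simp only [layer, indicator, mem_Ico, mem_Ioi, mem_Iio, Pi.one_apply]
  grind

theorem abs_layer (u s : ℝ) :
    |layer u s| = (Ico 0 u).indicator 1 s + (Ico u 0).indicator 1 s := by
  simp only [layer, indicator, mem_Ico, Pi.one_apply]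
  grind

theorem integrable_indicator_Ico_one (a b : ℝ) :
    Integrable ((Ico a b).indicator (1 : ℝ → ℝ)) :=
  (integrable_indicator_iff measurableSet_Ico).2 (integrableOn_const (by simp))

theorem integrable_layer (u : ℝ) : Integrable (layer u) :=
  (integrable_indicator_Ico_one 0 u).sub (integrable_indicator_Ico_one u 0)

theorem integral_layer (u : ℝ) : ∫ s, layer u s = u := by
  simp only [layer]
  rw [integral_sub (integrable_indicator_Ico_one 0 u) (integrable_indicator_Ico_one u 0),
    integral_indicator_one measurableSet_Ico, integral_indicator_one measurableSet_Ico]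
  simp only [Real.volume_real_Ico]
  grind

theorem integral_abs_layer (u : ℝ) : ∫ s, |layer u s| = |u| := by
  simp only [abs_layer]
  rw [integral_add (integrable_indicator_Ico_one 0 u) (integrable_indicator_Ico_one u 0),
    integral_indicator_one measurableSet_Ico, integral_indicator_one measurableSet_Ico]
  simp only [Real.volume_real_Ico]
  grind

theorem measurable_uncurry_layer : Measurable (Function.uncurry layer) := by
  have h : Function.uncurry layer = fun p : ℝ × ℝ =>
      {q : ℝ × ℝ | q.2 < q.1}.indicator 1 p - (Iio (0 : ℝ)).indicator 1 p.2 := by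
    ext ⟨u, s⟩
    simp [Function.uncurry, layer_eq_indicator_Ioi, indicator]
  rw [h]
  exact (measurable_one.indicator (measurableSet_lt measurable_snd measurable_fst)).sub
    ((measurable_one.indicator measurableSet_Iio).comp measurable_snd)

/-- The survival function of a measure on the plane. -/
noncomputable def survival (π : Measure (ℝ × ℝ)) (p : ℝ × ℝ) : ℝ :=
  π.real (Ioi p.1 ×ˢ Ioi p.2)

theorem integral_layer_mul_layer (π : Measure (ℝ × ℝ)) [IsProbabilityMeasure π] (p : ℝ × ℝ) :
    ∫ q, layer q.1 p.1 * layer q.2 p.2 ∂π =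
      survival π p - (Iio 0).indicator 1 p.2 * (π.map Prod.fst).real (Ioi p.1)
        - (Iio 0).indicator 1 p.1 * (π.map Prod.snd).real (Ioi p.2)
        + (Iio 0).indicator 1 p.1 * (Iio 0).indicator 1 p.2 := by
  have hm₁ : MeasurableSet ((Prod.fst : ℝ × ℝ → ℝ) ⁻¹' Ioi p.1) :=
    measurable_fst measurableSet_Ioi
  have hm₂ : MeasurableSet ((Prod.snd : ℝ × ℝ → ℝ) ⁻¹' Ioi p.2) :=
    measurable_snd measurableSet_Ioi
  have hm : MeasurableSet (Ioi p.1 ×ˢ Ioi p.2) := measurableSet_Ioi.prod measurableSet_Ioi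
  have hint {s : Set (ℝ × ℝ)} (hs : MeasurableSet s) :
      Integrable (s.indicator (1 : ℝ × ℝ → ℝ)) π :=
    (integrable_indicator_iff hs).2 (integrableOn_const (by simp))
  have hexpand : ∀ q : ℝ × ℝ, layer q.1 p.1 * layer q.2 p.2 =
      (Ioi p.1 ×ˢ Ioi p.2).indicator 1 q
        - (Iio 0).indicator 1 p.2 * (Prod.fst ⁻¹' Ioi p.1).indicator 1 q
        - (Iio 0).indicator 1 p.1 * (Prod.snd ⁻¹' Ioi p.2).indicator 1 q
        + (Iio 0).indicator 1 p.1 * (Iio 0).indicator 1 p.2 := by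
    intro q
    simp only [layer_eq_indicator_Ioi, indicator, mem_prod, mem_preimage, Pi.one_apply]
    grind
  simp_rw [hexpand]
  rw [integral_add _ (integrable_const _), integral_sub _ ((hint hm₂).const_mul _),
    integral_sub (hint hm) ((hint hm₁).const_mul _), integral_const_mul, integral_const_mul,
    integral_indicator_one hm, integral_indicator_one hm₁, integral_indicator_one hm₂,
    map_measureReal_apply measurable_fst measurableSet_Ioi,
    map_measureReal_apply measurable_snd measurableSet_Ioi]
  · simp [survival]
  · exact (hint hm).sub ((hint hm₁).const_mul _)
  · exact ((hint hm).sub ((hint hm₁).const_mul _)).sub ((hint hm₂).const_mul _)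

theorem integrable_layer_mul_layer {π : Measure (ℝ × ℝ)} [IsProbabilityMeasure π]
    (h : Integrable (fun q : ℝ × ℝ => q.1 * q.2) π) :
    Integrable (Function.uncurry fun q p : ℝ × ℝ => layer q.1 p.1 * layer q.2 p.2)
      (π.prod volume) := by
  have hmeas : Measurable
      (Function.uncurry fun q p : ℝ × ℝ => layer q.1 p.1 * layer q.2 p.2) :=
    (measurable_uncurry_layer.comp (by fun_prop :
      Measurable fun r : (ℝ × ℝ) × (ℝ × ℝ) => (r.1.1, r.2.1))).mul
    (measurable_uncurry_layer.comp (by fun_prop :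
      Measurable fun r : (ℝ × ℝ) × (ℝ × ℝ) => (r.1.2, r.2.2)))
  refine (integrable_prod_iff hmeas.aestronglyMeasurable).2 ⟨.of_forall fun q => ?_, ?_⟩
  · exact (integrable_layer q.1).mul_prod (integrable_layer q.2)
  · refine h.norm.congr (.of_forall fun q => ?_)
    simp only [Function.uncurry_apply_pair, norm_mul, Real.norm_eq_abs]
    rw [Measure.volume_eq_prod, integral_prod_mul (fun s => |layer q.1 s|)
      (fun s => |layer q.2 s|), integral_abs_layer, integral_abs_layer]

theorem integral_mul_eq_integral_integral_layer {π : Measure (ℝ × ℝ)} [IsProbabilityMeasure π]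
    (h : Integrable (fun q : ℝ × ℝ => q.1 * q.2) π) :
    ∫ q, q.1 * q.2 ∂π = ∫ p : ℝ × ℝ, ∫ q, layer q.1 p.1 * layer q.2 p.2 ∂π := by
  rw [← integral_integral_swap (integrable_layer_mul_layer h)]
  refine integral_congr_ae (.of_forall fun q => ?_)
  dsimp only
  rw [Measure.volume_eq_prod, integral_prod_mul (layer q.1) (layer q.2), integral_layer,
    integral_layer]

/-- Finite measures on the plane with the same total mass and the same masses of open upper right
quadrants coincide. -/
theorem measure_ext_of_Ioi_prod_Ioi {π ρ : Measure (ℝ × ℝ)} [IsFiniteMeasure π]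
    (huniv : π univ = ρ univ) (h : ∀ s t : ℝ, π (Ioi s ×ˢ Ioi t) = ρ (Ioi s ×ˢ Ioi t)) :
    π = ρ := by
  have hspan : IsCountablySpanning (range (Ioi : ℝ → Set ℝ)) := by
    refine ⟨fun n : ℕ => Ioi (-(n : ℝ)), fun n => mem_range_self _, ?_⟩
    refine eq_univ_of_forall fun x => mem_iUnion.2 ?_
    obtain ⟨n, hn⟩ := exists_nat_gt (-x)
    exact ⟨n, by simpa [neg_lt] using hn⟩
  have hgen : MeasurableSpace.generateFrom (range (Ioi : ℝ → Set ℝ)) = Real.measurableSpace :=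
    (borel_eq_generateFrom_Ioi ℝ).symm
  refine ext_of_generate_finite _ (generateFrom_eq_prod hgen hgen hspan hspan).symm
    (isPiSystem_Ioi.prod isPiSystem_Ioi) ?_ huniv
  rintro _ ⟨_, ⟨s, rfl⟩, _, ⟨t, rfl⟩, rfl⟩
  exact h s t

/-- A comparison of quadrant masses that holds almost everywhere holds everywhere. -/
theorem measure_Ioi_prod_Ioi_le_of_ae_le {π ρ : Measure (ℝ × ℝ)}
    (h : ∀ᵐ p : ℝ × ℝ, π (Ioi p.1 ×ˢ Ioi p.2) ≤ ρ (Ioi p.1 ×ˢ Ioi p.2)) (s t : ℝ) :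
    π (Ioi s ×ˢ Ioi t) ≤ ρ (Ioi s ×ˢ Ioi t) := by
  obtain ⟨ε, hanti, hpos, hlim⟩ := exists_seq_strictAnti_tendsto (0 : ℝ)
  have hunion : Ioi s ×ˢ Ioi t = ⋃ n, Ioi (s + ε n) ×ˢ Ioi (t + ε n) := by
    ext ⟨x, y⟩
    simp only [mem_prod, mem_Ioi, mem_iUnion]
    constructor
    · rintro ⟨hx, hy⟩
      obtain ⟨n, hn⟩ := (hlim.eventually_lt_const (lt_min (sub_pos.2 hx) (sub_pos.2 hy))).exists
      have := lt_min_iff.1 hn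
      exact ⟨n, by linarith, by linarith⟩
    · rintro ⟨n, hx, hy⟩
      have := hpos n
      exact ⟨by linarith, by linarith⟩
  have hmono : Monotone fun n => Ioi (s + ε n) ×ˢ Ioi (t + ε n) := fun m n hmn =>
    prod_mono (Ioi_subset_Ioi (by linarith [hanti.antitone hmn]))
      (Ioi_subset_Ioi (by linarith [hanti.antitone hmn]))
  conv_lhs => rw [hunion, hmono.measure_iUnion]
  refine iSup_le fun n => ?_
  have hbox : volume (Ioo s (s + ε n) ×ˢ Ioo t (t + ε n)) ≠ 0 := by
    simp [Measure.volume_eq_prod, Measure.prod_prod, hpos n]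
  obtain ⟨p, ⟨⟨hs, hs'⟩, ht, ht'⟩, hp⟩ :=
    ((frequently_ae_mem_iff.2 hbox).and_eventually h).exists
  exact (measure_mono (prod_mono (Ioi_subset_Ioi hs'.le) (Ioi_subset_Ioi ht'.le))).trans
    (hp.trans (measure_mono (prod_mono (Ioi_subset_Ioi hs.le) (Ioi_subset_Ioi ht.le))))

/-- Two laws on the plane with the same marginals, one dominating the other in the orthant order,
coincide as soon as they give the same expectation to the product of the coordinates. -/
theorem measure_eq_of_orthant_le_of_integral_mul_eq {π ρ : Measure (ℝ × ℝ)}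
    [IsProbabilityMeasure π] [IsProbabilityMeasure ρ]
    (hfst : π.map Prod.fst = ρ.map Prod.fst) (hsnd : π.map Prod.snd = ρ.map Prod.snd)
    (hle : ∀ s t : ℝ, π (Ioi s ×ˢ Ioi t) ≤ ρ (Ioi s ×ˢ Ioi t))
    (hπ : Integrable (fun q : ℝ × ℝ => q.1 * q.2) π)
    (hρ : Integrable (fun q : ℝ × ℝ => q.1 * q.2) ρ)
    (heq : ∫ q, q.1 * q.2 ∂π = ∫ q, q.1 * q.2 ∂ρ) : π = ρ := by
  have hdiff : ∀ p : ℝ × ℝ, (∫ q, layer q.1 p.1 * layer q.2 p.2 ∂ρ)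
      - ∫ q, layer q.1 p.1 * layer q.2 p.2 ∂π = survival ρ p - survival π p := by
    intro p
    rw [integral_layer_mul_layer, integral_layer_mul_layer, hfst, hsnd]
    ring
  have hiπ := (integrable_layer_mul_layer hπ).integral_prod_right
  have hiρ := (integrable_layer_mul_layer hρ).integral_prod_right
  have hzero : ∫ p : ℝ × ℝ, (survival ρ p - survival π p) = 0 := by
    simp_rw [← hdiff]
    refine (integral_sub hiρ hiπ).trans ?_
    simp only [Function.uncurry_apply_pair]
    rw [← integral_mul_eq_integral_integral_layer hρ,
      ← integral_mul_eq_integral_integral_layer hπ, heq, sub_self]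
  have hint : Integrable fun p : ℝ × ℝ => survival ρ p - survival π p :=
    (hiρ.sub hiπ).congr (.of_forall hdiff)
  have hnonneg : 0 ≤ fun p : ℝ × ℝ => survival ρ p - survival π p := fun p =>
    sub_nonneg.2 (ENNReal.toReal_mono (measure_ne_top _ _) (hle p.1 p.2))
  have hae := (integral_eq_zero_iff_of_nonneg hnonneg hint).1 hzero
  refine measure_ext_of_Ioi_prod_Ioi (by simp) fun s t => (hle s t).antisymm
    (measure_Ioi_prod_Ioi_le_of_ae_le (hae.mono fun p hp => ?_) s t)
  exact (ENNReal.toReal_le_toReal (measure_ne_top _ _) (measure_ne_top _ _)).1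
    (sub_nonpos.1 hp.le)

section Comonotonic

variable {Ω : Type*} [MeasurableSpace Ω] {μ : Measure Ω}

/-- The joint law of a comonotonic pair is maximal in the orthant order among the laws with the
same marginals. -/
theorem Comonotonic.map_Ioi_prod_Ioi_le {U V W : Ω → ℝ} (hU : Measurable U)
    (hV : Measurable V) (hW : Measurable W) (hVW : μ.map W = μ.map V)
    (h : Comonotonic μ U W) (s t : ℝ) :
    μ.map (fun ω => (U ω, V ω)) (Ioi s ×ˢ Ioi t)
      ≤ μ.map (fun ω => (U ω, W ω)) (Ioi s ×ˢ Ioi t) := by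
  obtain ⟨Z, ν₁, ν₂, hZ, hν₁, hν₂, hlaw⟩ := h
  have hZ₁ : Measurable fun ω => ν₁ (Z ω) := hν₁.measurable.comp hZ
  have hZ₂ : Measurable fun ω => ν₂ (Z ω) := hν₂.measurable.comp hZ
  have hfst : μ.map U = μ.map fun ω => ν₁ (Z ω) := by
    simpa [Measure.map_map measurable_fst, hU.prodMk hW, hZ₁.prodMk hZ₂, Function.comp_def]
      using congrArg (Measure.map Prod.fst) hlaw
  have hsnd : μ.map W = μ.map fun ω => ν₂ (Z ω) := by
    simpa [Measure.map_map measurable_snd, hU.prodMk hW, hZ₁.prodMk hZ₂, Function.comp_def]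
      using congrArg (Measure.map Prod.snd) hlaw
  have hm : MeasurableSet (Ioi s ×ˢ Ioi t) := measurableSet_Ioi.prod measurableSet_Ioi
  rw [hlaw, Measure.map_apply (hU.prodMk hV) hm, Measure.map_apply (hZ₁.prodMk hZ₂) hm]
  have hup₁ : IsUpperSet (ν₁ ⁻¹' Ioi s) := (isUpperSet_Ioi s).preimage hν₁
  have hup₂ : IsUpperSet (ν₂ ⁻¹' Ioi t) := (isUpperSet_Ioi t).preimage hν₂
  rcases hup₁.total hup₂ with hsub | hsub
  · calc μ ((fun ω => (U ω, V ω)) ⁻¹' Ioi s ×ˢ Ioi t)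
        ≤ μ (U ⁻¹' Ioi s) := measure_mono fun ω hω => hω.1
      _ = μ ((fun ω => ν₁ (Z ω)) ⁻¹' Ioi s) := by
        rw [← Measure.map_apply hU measurableSet_Ioi, hfst,
          Measure.map_apply hZ₁ measurableSet_Ioi]
      _ ≤ μ ((fun ω => (ν₁ (Z ω), ν₂ (Z ω))) ⁻¹' Ioi s ×ˢ Ioi t) :=
        measure_mono fun ω hω => ⟨hω, hsub hω⟩
  · calc μ ((fun ω => (U ω, V ω)) ⁻¹' Ioi s ×ˢ Ioi t)
        ≤ μ (V ⁻¹' Ioi t) := measure_mono fun ω hω => hω.2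
      _ = μ ((fun ω => ν₂ (Z ω)) ⁻¹' Ioi t) := by
        rw [← Measure.map_apply hV measurableSet_Ioi, ← hVW, hsnd,
          Measure.map_apply hZ₂ measurableSet_Ioi]
      _ ≤ μ ((fun ω => (ν₁ (Z ω), ν₂ (Z ω))) ⁻¹' Ioi s ×ˢ Ioi t) :=
        measure_mono fun ω hω => ⟨hsub hω, hω⟩

theorem map_prodMk_comp_congr {X Y A B : Ω → ℝ} (hX : Measurable X) (hY : Measurable Y)
    (hA : Measurable A) (hB : Measurable B) {g₁ g₂ : ℝ → ℝ} (hg₁ : Measurable g₁)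
    (hg₂ : Measurable g₂) (h : μ.map (fun ω => (X ω, Y ω)) = μ.map fun ω => (A ω, B ω)) :
    μ.map (fun ω => (g₁ (X ω), g₂ (Y ω))) = μ.map fun ω => (g₁ (A ω), g₂ (B ω)) := by
  have hmap := congrArg (Measure.map (Prod.map g₁ g₂)) h
  rwa [Measure.map_map (hg₁.prodMap hg₂) (hX.prodMk hY),
    Measure.map_map (hg₁.prodMap hg₂) (hA.prodMk hB)] at hmap

theorem Comonotonic.comp {X Y : Ω → ℝ} (hX : Measurable X) (hY : Measurable Y)
    (h : Comonotonic μ X Y) {g₁ g₂ : ℝ → ℝ} (hg₁ : Monotone g₁) (hg₂ : Monotone g₂) :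
    Comonotonic μ (fun ω => g₁ (X ω)) (fun ω => g₂ (Y ω)) := by
  obtain ⟨Z, ν₁, ν₂, hZ, hν₁, hν₂, hlaw⟩ := h
  exact ⟨Z, g₁ ∘ ν₁, g₂ ∘ ν₂, hZ, hg₁.comp hν₁, hg₂.comp hν₂,
    map_prodMk_comp_congr hX hY (hν₁.measurable.comp hZ) (hν₂.measurable.comp hZ)
      hg₁.measurable hg₂.measurable hlaw⟩

theorem Countermonotonic.neg_right {X Y : Ω → ℝ} (hX : Measurable X) (hY : Measurable Y)
    (h : Countermonotonic μ X Y) : Comonotonic μ X (fun ω => -Y ω) := by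
  obtain ⟨Z, ν₁, ν₂, hZ, hν₁, hν₂, hlaw⟩ := h
  exact ⟨Z, ν₁, fun z => -ν₂ z, hZ, hν₁, hν₂.neg,
    map_prodMk_comp_congr hX hY (hν₁.measurable.comp hZ) (hν₂.measurable.comp hZ)
      measurable_id measurable_neg hlaw⟩

theorem Comonotonic.of_neg_right {X Y : Ω → ℝ} (hX : Measurable X) (hY : Measurable Y)
    (h : Comonotonic μ X (fun ω => -Y ω)) : Countermonotonic μ X Y := by
  obtain ⟨Z, ν₁, ν₂, hZ, hν₁, hν₂, hlaw⟩ := h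
  refine ⟨Z, ν₁, fun z => -ν₂ z, hZ, hν₁, hν₂.neg, ?_⟩
  simpa using map_prodMk_comp_congr hX hY.neg (hν₁.measurable.comp hZ)
    (hν₂.measurable.comp hZ) measurable_id measurable_neg hlaw

/-- A pair whose transformed product has the same expectation as for a comonotonic pair with the
same marginals is comonotonic. -/
theorem comonotonic_of_integral_mul_eq [IsProbabilityMeasure μ] {X Y W : Ω → ℝ}
    (hX : Measurable X) (hY : Measurable Y) (hW : Measurable W) (hid : μ.map W = μ.map Y)
    (hco : Comonotonic μ X W) {g₁ g₂ : ℝ → ℝ} (hg₁ : StrictMono g₁) (hg₂ : StrictMono g₂)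
    (hiY : Integrable (fun ω => g₁ (X ω) * g₂ (Y ω)) μ)
    (hiW : Integrable (fun ω => g₁ (X ω) * g₂ (W ω)) μ)
    (heq : ∫ ω, g₁ (X ω) * g₂ (Y ω) ∂μ = ∫ ω, g₁ (X ω) * g₂ (W ω) ∂μ) :
    Comonotonic μ X Y := by
  have hm₁ := hg₁.monotone.measurable
  have hm₂ := hg₂.monotone.measurable
  have hU : Measurable fun ω => g₁ (X ω) := hm₁.comp hX
  have hV : Measurable fun ω => g₂ (Y ω) := hm₂.comp hY
  have hV' : Measurable fun ω => g₂ (W ω) := hm₂.comp hW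
  have hid' : μ.map (fun ω => g₂ (W ω)) = μ.map fun ω => g₂ (Y ω) := by
    simpa [Measure.map_map hm₂, hY, hW, Function.comp_def] using congrArg (Measure.map g₂) hid
  have hmul : Measurable fun q : ℝ × ℝ => q.1 * q.2 := by fun_prop
  have : IsProbabilityMeasure (μ.map fun ω => (g₁ (X ω), g₂ (Y ω))) :=
    Measure.isProbabilityMeasure_map (hU.prodMk hV).aemeasurable
  have : IsProbabilityMeasure (μ.map fun ω => (g₁ (X ω), g₂ (W ω))) :=
    Measure.isProbabilityMeasure_map (hU.prodMk hV').aemeasurable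
  have hlaw : μ.map (fun ω => (g₁ (X ω), g₂ (Y ω))) = μ.map fun ω => (g₁ (X ω), g₂ (W ω)) := by
    refine measure_eq_of_orthant_le_of_integral_mul_eq ?_ ?_
      ((hco.comp hX hW hg₁.monotone hg₂.monotone).map_Ioi_prod_Ioi_le hU hV hV' hid') ?_ ?_ ?_
    · simp [Measure.map_map measurable_fst, hU.prodMk hV, hU.prodMk hV', Function.comp_def]
    · simp [Measure.map_map measurable_snd, hU.prodMk hV, hU.prodMk hV', Function.comp_def, hid']
    · exact (integrable_map_measure hmul.aestronglyMeasurable (hU.prodMk hV).aemeasurable).2 hiY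
    · exact (integrable_map_measure hmul.aestronglyMeasurable (hU.prodMk hV').aemeasurable).2 hiW
    · rw [integral_map (hU.prodMk hV).aemeasurable hmul.aestronglyMeasurable,
        integral_map (hU.prodMk hV').aemeasurable hmul.aestronglyMeasurable]
      exact heq
  have hemb : MeasurableEmbedding (Prod.map g₁ g₂) :=
    (hm₁.measurableEmbedding hg₁.injective).prodMap (hm₂.measurableEmbedding hg₂.injective)
  have hjoint : μ.map (fun ω => (X ω, Y ω)) = μ.map fun ω => (X ω, W ω) := by
    refine hemb.map_injective ?_
    simpa [Measure.map_map hemb.measurable, hX.prodMk hY, hX.prodMk hW, Function.comp_def]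
      using hlaw
  obtain ⟨Z, ν₁, ν₂, hZ, hν₁, hν₂, h⟩ := hco
  exact ⟨Z, ν₁, ν₂, hZ, hν₁, hν₂, hjoint.trans h⟩

theorem integral_mul_eq_of_covar_eq {X Y W : Ω → ℝ} (hY : Measurable Y) (hW : Measurable W)
    (hid : μ.map W = μ.map Y) {g₁ g₂ : ℝ → ℝ} (hg₂ : Measurable g₂)
    (h : covar μ (fun ω => g₁ (X ω)) (fun ω => g₂ (Y ω))
      = covar μ (fun ω => g₁ (X ω)) (fun ω => g₂ (W ω))) :
    ∫ ω, g₁ (X ω) * g₂ (Y ω) ∂μ = ∫ ω, g₁ (X ω) * g₂ (W ω) ∂μ := by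
  have hmean : ∫ ω, g₂ (Y ω) ∂μ = ∫ ω, g₂ (W ω) ∂μ := by
    rw [← integral_map hY.aemeasurable hg₂.aestronglyMeasurable, ← hid,
      integral_map hW.aemeasurable hg₂.aestronglyMeasurable]
  simpa only [covar, hmean, sub_left_inj] using h

end Comonotonic

theorem equality_in_frechet_hoeffding_implies_co_or_countermonotonic
    {Ω : Type*} [MeasurableSpace Ω] (μ : Measure Ω) [IsProbabilityMeasure μ]
    (X Y Y' Y'' : Ω → ℝ)
    (hX : Measurable X) (hY : Measurable Y) (hY' : Measurable Y') (hY'' : Measurable Y'')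
    (hid' : μ.map Y' = μ.map Y) (hid'' : μ.map Y'' = μ.map Y)
    (hcm : Countermonotonic μ X Y') (hco : Comonotonic μ X Y'')
    (g₁ g₂ : ℝ → ℝ) (hg₁ : StrictMono g₁) (hg₂ : StrictMono g₂)
    (hiX : Integrable (fun ω => g₁ (X ω)) μ)
    (hiY : Integrable (fun ω => g₂ (Y ω)) μ)
    (hiY' : Integrable (fun ω => g₂ (Y' ω)) μ)
    (hiY'' : Integrable (fun ω => g₂ (Y'' ω)) μ)
    (hiP : Integrable (fun ω => g₁ (X ω) * g₂ (Y ω)) μ)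
    (hiP' : Integrable (fun ω => g₁ (X ω) * g₂ (Y' ω)) μ)
    (hiP'' : Integrable (fun ω => g₁ (X ω) * g₂ (Y'' ω)) μ) :
    (covar μ (fun ω => g₁ (X ω)) (fun ω => g₂ (Y ω))
        = covar μ (fun ω => g₁ (X ω)) (fun ω => g₂ (Y'' ω)) →
      Comonotonic μ X Y) ∧
    (covar μ (fun ω => g₁ (X ω)) (fun ω => g₂ (Y ω))
        = covar μ (fun ω => g₁ (X ω)) (fun ω => g₂ (Y' ω)) →
      Countermonotonic μ X Y) := by
  refine ⟨fun h => comonotonic_of_integral_mul_eq hX hY hY'' hid'' hco hg₁ hg₂ hiP hiP''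
    (integral_mul_eq_of_covar_eq hY hY'' hid'' hg₂.monotone.measurable h), fun h => ?_⟩
  have heq := integral_mul_eq_of_covar_eq hY hY' hid' hg₂.monotone.measurable h
  have hidneg : μ.map (fun ω => -Y' ω) = μ.map fun ω => -Y ω := by
    simpa [Measure.map_map measurable_neg, hY, hY', Function.comp_def]
      using congrArg (Measure.map Neg.neg) hid'
  have hgneg : StrictMono fun y => -g₂ (-y) := fun a b hab =>
    neg_lt_neg (hg₂ (neg_lt_neg hab))
  refine (comonotonic_of_integral_mul_eq hX hY.neg hY'.neg hidneg (hcm.neg_right hX hY') hg₁ hgneg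
    ?_ ?_ ?_).of_neg_right hX hY
  · simpa using hiP
  · simpa using hiP'
  · simpa [integral_neg] using heq
end

section
/- Let X, Y be real random variables on a common probability space. Then X and Y are globally positively dependent (i.e., P(X ≤ a, Y ≤ b) ≥ F_X(a)·F_Y(b) for all a, b ∈ ℝ) if and only if QCov_{α,β}(X,Y) ≥ 0 for all α, β ∈ (0,1); and X and Y are globally negatively dependent (i.e., P(X ≤ a, Y ≤ b) ≤ F_X(a)·F_Y(b) for all a, b ∈ ℝ) if and only if QCov_{α,β}(X,Y) ≤ 0 for all α, β ∈ (0,1). -/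
open MeasureTheory

/-- The CDF of a real random variable `X` under `μ`. -/
noncomputable def cdfF {Ω : Type*} [MeasurableSpace Ω] (μ : Measure Ω)
    (X : Ω → ℝ) (x : ℝ) : ℝ :=
  (μ {ω | X ω ≤ x}).toReal

/-- The lower α-quantile of `X` under `μ`. -/
noncomputable def lquant {Ω : Type*} [MeasurableSpace Ω] (μ : Measure Ω)
    (X : Ω → ℝ) (α : ℝ) : ℝ :=
  sInf {x : ℝ | α ≤ cdfF μ X x}

/-- The quantile covariance of `X` and `Y` at levels `α, β`. -/
noncomputable def QCov {Ω : Type*} [MeasurableSpace Ω] (μ : Measure Ω)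
    (X Y : Ω → ℝ) (α β : ℝ) : ℝ :=
  (μ {ω | X ω ≤ lquant μ X α ∧ Y ω ≤ lquant μ Y β}).toReal
    - cdfF μ X (lquant μ X α) * cdfF μ Y (lquant μ Y β)

section

variable {Ω : Type*} [MeasurableSpace Ω] {μ : Measure Ω} [IsProbabilityMeasure μ] {X Y : Ω → ℝ}

lemma cdfF_eq_cdf_map (hX : Measurable X) (x : ℝ) :
    cdfF μ X x = ProbabilityTheory.cdf (μ.map X) x := by
  have := Measure.isProbabilityMeasure_map (μ := μ) hX.aemeasurable
  rw [ProbabilityTheory.cdf_eq_real, map_measureReal_apply hX measurableSet_Iic]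
  rfl

lemma bddBelow_setOf_le_cdfF (hX : Measurable X) {α : ℝ} (hα : 0 < α) :
    BddBelow {x : ℝ | α ≤ cdfF μ X x} := by
  obtain ⟨m, hm⟩ :=
    ((ProbabilityTheory.tendsto_cdf_atBot (μ.map X)).eventually_lt_const hα).exists
  refine ⟨m, fun x hx => le_of_not_gt fun hxm => ?_⟩
  rw [Set.mem_ofPred_eq, cdfF_eq_cdf_map hX] at hx
  exact absurd (hx.trans (ProbabilityTheory.monotone_cdf _ hxm.le)) (not_le.2 hm)

/-- The lower quantile at an attained level attains at least that level. -/
lemma le_cdfF_lquant (hX : Measurable X) {α a : ℝ} (hα : 0 < α) (ha : α ≤ cdfF μ X a) :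
    α ≤ cdfF μ X (lquant μ X α) := by
  have hbdd := bddBelow_setOf_le_cdfF (μ := μ) hX hα
  have hright : Filter.Tendsto (ProbabilityTheory.cdf (μ.map X))
      (nhdsWithin (lquant μ X α) (Set.Ioi (lquant μ X α)))
      (nhds (ProbabilityTheory.cdf (μ.map X) (lquant μ X α))) :=
    ((ProbabilityTheory.cdf (μ.map X)).right_continuous _).mono_left
      (nhdsWithin_mono _ Set.Ioi_subset_Ici_self)
  rw [cdfF_eq_cdf_map hX]
  refine ge_of_tendsto hright ?_
  filter_upwards [self_mem_nhdsWithin] with y hy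
  obtain ⟨x, hx, hxy⟩ := (csInf_lt_iff hbdd ⟨a, ha⟩).1 hy
  rw [Set.mem_ofPred_eq, cdfF_eq_cdf_map hX] at hx
  exact hx.trans (ProbabilityTheory.monotone_cdf _ hxy.le)

/-- Replacing `a` by the quantile at level `F_X(a)` changes `{X ≤ a}` only by a null set. -/
lemma setOf_le_lquant_cdfF_ae_eq (hX : Measurable X) {a : ℝ} (ha : 0 < cdfF μ X a) :
    {ω | X ω ≤ lquant μ X (cdfF μ X a)} =ᵐ[μ] {ω | X ω ≤ a} := by
  have hle : lquant μ X (cdfF μ X a) ≤ a :=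
    csInf_le (bddBelow_setOf_le_cdfF hX ha) (le_refl (cdfF μ X a))
  refine ae_eq_of_subset_of_measure_ge (fun ω hω => le_trans hω hle) ?_
    (measurableSet_le hX measurable_const).nullMeasurableSet (measure_ne_top _ _)
  exact (ENNReal.toReal_le_toReal (measure_ne_top _ _) (measure_ne_top _ _)).1
    (le_cdfF_lquant hX ha le_rfl)

lemma QCov_cdfF (hX : Measurable X) (hY : Measurable Y) {a b : ℝ}
    (ha : 0 < cdfF μ X a) (hb : 0 < cdfF μ Y b) :
    QCov μ X Y (cdfF μ X a) (cdfF μ Y b) =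
      (μ {ω | X ω ≤ a ∧ Y ω ≤ b}).toReal - cdfF μ X a * cdfF μ Y b := by
  have hXa := setOf_le_lquant_cdfF_ae_eq hX ha
  have hYb := setOf_le_lquant_cdfF_ae_eq hY hb
  have hjoint := measure_congr (hXa.inter hYb)
  have hFX : cdfF μ X (lquant μ X (cdfF μ X a)) = cdfF μ X a :=
    congrArg ENNReal.toReal (measure_congr hXa)
  have hFY : cdfF μ Y (lquant μ Y (cdfF μ Y b)) = cdfF μ Y b :=
    congrArg ENNReal.toReal (measure_congr hYb)
  rw [QCov, hFX, hFY]
  exact congrArg (fun m => ENNReal.toReal m - cdfF μ X a * cdfF μ Y b) hjoint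

/-- An event of probability zero or one is independent of every event. -/
lemma toReal_measure_inter_of_notMem_Ioo {s t : Set Ω} (hs : MeasurableSet s)
    (h : (μ s).toReal ∉ Set.Ioo (0 : ℝ) 1) :
    (μ (s ∩ t)).toReal = (μ s).toReal * (μ t).toReal := by
  rcases (ENNReal.toReal_nonneg (a := μ s)).eq_or_lt with h0 | h0
  · have hs0 : μ s = 0 := ((ENNReal.toReal_eq_zero_iff _).1 h0.symm).resolve_right
      (measure_ne_top _ _)
    simp [hs0, measure_mono_null Set.inter_subset_left hs0]
  · have h1 : μ s = 1 := by
      refine le_antisymm prob_le_one ?_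
      have hreal : (1 : ℝ) ≤ (μ s).toReal := not_lt.1 fun hlt => h ⟨h0, hlt⟩
      rw [← ENNReal.toReal_one] at hreal
      exact (ENNReal.toReal_le_toReal ENNReal.one_ne_top (measure_ne_top _ _)).1 hreal
    have hae : s =ᵐ[μ] Set.univ := by
      rw [ae_eq_univ, prob_compl_eq_zero_iff hs, h1]
    rw [measure_congr (hae.inter (Filter.EventuallyEq.refl _ t)), Set.univ_inter, h1]
    simp

/-- Either the joint probability factorizes at `(a, b)`, or both marginal levels lie in `(0, 1)`. -/
lemma joint_eq_mul_or_mem_Ioo (hX : Measurable X) (hY : Measurable Y) (a b : ℝ) :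
    (μ {ω | X ω ≤ a ∧ Y ω ≤ b}).toReal = cdfF μ X a * cdfF μ Y b ∨
      cdfF μ X a ∈ Set.Ioo (0 : ℝ) 1 ∧ cdfF μ Y b ∈ Set.Ioo (0 : ℝ) 1 := by
  by_cases ha : cdfF μ X a ∈ Set.Ioo (0 : ℝ) 1
  · by_cases hb : cdfF μ Y b ∈ Set.Ioo (0 : ℝ) 1
    · exact Or.inr ⟨ha, hb⟩
    · left
      rw [mul_comm, Set.ofPred_and, Set.inter_comm]
      exact toReal_measure_inter_of_notMem_Ioo (measurableSet_le hY measurable_const) hb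
  · left
    exact toReal_measure_inter_of_notMem_Ioo (measurableSet_le hX measurable_const) ha

end

theorem global_dependence_iff_quantile_covariance_sign
    {Ω : Type*} [MeasurableSpace Ω] (μ : Measure Ω) [IsProbabilityMeasure μ]
    (X Y : Ω → ℝ) (hX : Measurable X) (hY : Measurable Y) :
    ((∀ a b : ℝ, cdfF μ X a * cdfF μ Y b ≤ (μ {ω | X ω ≤ a ∧ Y ω ≤ b}).toReal) ↔
      ∀ α ∈ Set.Ioo (0 : ℝ) 1, ∀ β ∈ Set.Ioo (0 : ℝ) 1, 0 ≤ QCov μ X Y α β) ∧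
    ((∀ a b : ℝ, (μ {ω | X ω ≤ a ∧ Y ω ≤ b}).toReal ≤ cdfF μ X a * cdfF μ Y b) ↔
      ∀ α ∈ Set.Ioo (0 : ℝ) 1, ∀ β ∈ Set.Ioo (0 : ℝ) 1, QCov μ X Y α β ≤ 0) := by
  refine ⟨⟨fun h α _ β _ => sub_nonneg.2 (h _ _), fun h a b => ?_⟩,
    ⟨fun h α _ β _ => sub_nonpos.2 (h _ _), fun h a b => ?_⟩⟩
  · rcases joint_eq_mul_or_mem_Ioo (μ := μ) hX hY a b with heq | ⟨ha, hb⟩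
    · exact heq.ge
    · have hq := h _ ha _ hb
      rwa [QCov_cdfF hX hY ha.1 hb.1, sub_nonneg] at hq
  · rcases joint_eq_mul_or_mem_Ioo (μ := μ) hX hY a b with heq | ⟨ha, hb⟩
    · exact heq.le
    · have hq := h _ ha _ hb
      rwa [QCov_cdfF hX hY ha.1 hb.1, sub_nonpos] at hq
end
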